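/- Suppose (S,d) is a δ-hyperbolic geodesic metric space with δ ∈ ℕ and a group G acts on S isometrically and acylindrically. Then for any ξ ∈ ∂S, the stabilizer Stab_G(ξ) = {g ∈ G : gξ = ξ} is virtually cyclic. In particular, for any countable group acting acylindrically on a hyperbolic geodesic metric space, all stabilizers of Gromov boundary points are amenable. -/

import Mathlib

open scoped ENNReal

noncomputable section

namespace ArXiv

/-! ### Gromov products, hyperbolicity and the Gromov boundary,
for a general distance function -/

variable {α : Type*}

/-- The Gromov product of `x` and `y` at `o` with respect to the distance function `d`. -/
def gprod (d : α → α → ℝ) (x y o : α) : ℝ := (d x o + d y o - d x y) / 2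

/-- The four-point δ-hyperbolicity condition. -/
def HyperbolicWith (d : α → α → ℝ) (δ : ℝ) : Prop :=
  ∀ w x y z : α, min (gprod d x y w) (gprod d y z w) - δ ≤ gprod d x z w

/-- Gromov hyperbolicity of the distance function `d`. -/
def IsHyperbolic (d : α → α → ℝ) : Prop := ∃ δ : ℝ, 0 ≤ δ ∧ HyperbolicWith d δ

/-- A sequence converges to infinity: the Gromov products at some (equivalently, any)
basepoint tend to infinity. -/
def ConvInf (d : α → α → ℝ) (x : ℕ → α) : Prop :=
  ∀ o : α, ∀ R : ℝ, ∃ N : ℕ, ∀ i, N ≤ i → ∀ j, N ≤ j → R ≤ gprod d (x i) (x j) o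

/-- Sequences converging to infinity. -/
abbrev BSeq (d : α → α → ℝ) := {x : ℕ → α // ConvInf d x}

/-- The equivalence of sequences converging to infinity defining the Gromov boundary. -/
def BRel (d : α → α → ℝ) (x y : BSeq d) : Prop :=
  ∀ o : α, ∀ R : ℝ, ∃ N : ℕ, ∀ i, N ≤ i → ∀ j, N ≤ j → R ≤ gprod d (x.1 i) (y.1 j) o

/-- The (sequential) Gromov boundary of `(α, d)`. -/
abbrev Bdry (d : α → α → ℝ) := Quot (BRel d)

/-- The extension of the Gromov product at `o` to boundary points. -/
def bgp (d : α → α → ℝ) (o : α) (ξ η : Bdry d) : EReal :=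
  sSup {r : EReal | ∃ x y : BSeq d, Quot.mk (BRel d) x = ξ ∧ Quot.mk (BRel d) y = η ∧
    r = Filter.liminf
      (fun pq : ℕ × ℕ => ((gprod d (x.1 pq.1) (y.1 pq.2) o : ℝ) : EReal)) Filter.atTop}

/-- The canonical topology on the Gromov boundary, generated by the sets
`{η | (ξ,η)_o > n}`. -/
def bdryTop (d : α → α → ℝ) : TopologicalSpace (Bdry d) :=
  TopologicalSpace.generateFrom
    {U : Set (Bdry d) | ∃ (ξ : Bdry d) (o : α) (n : ℝ), U = {η | (n : EReal) < bgp d o ξ η}}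

/-! ### Stabilizers of boundary points of acylindrical actions -/

/-- `α` is a geodesic metric space: any two points are joined by an isometrically
embedded segment. -/
def GeodesicSpace (α : Type*) [MetricSpace α] : Prop :=
  ∀ x y : α, ∃ f : ℝ → α, f 0 = x ∧ f (dist x y) = y ∧
    ∀ s t : ℝ, s ∈ Set.Icc 0 (dist x y) → t ∈ Set.Icc 0 (dist x y) →
      dist (f s) (f t) = |s - t|

/-- `g` fixes the boundary point `ξ` under the natural extension of the action of `G`
on `(α,d)` to the Gromov boundary. -/
def BFixes {α G : Type*} [SMul G α] (d : α → α → ℝ) (g : G) (ξ : Bdry d) : Prop :=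
  ∃ (x : BSeq d) (h : ConvInf d fun n => g • x.1 n),
    Quot.mk (BRel d) x = ξ ∧ Quot.mk (BRel d) (⟨fun n => g • x.1 n, h⟩ : BSeq d) = ξ

/-- The subset `S` of a group `G` (in practice, a subgroup) is amenable: it carries a
finitely additive, left translation invariant probability measure defined on all its
subsets. -/
def AmenableSet {G : Type*} [Group G] (S : Set G) : Prop :=
  ∃ μ : Set G → ℝ, μ S = 1 ∧ (∀ A : Set G, A ⊆ S → 0 ≤ μ A) ∧
    (∀ A B : Set G, A ⊆ S → B ⊆ S → Disjoint A B → μ (A ∪ B) = μ A + μ B) ∧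
    ∀ g ∈ S, ∀ A : Set G, A ⊆ S → μ ((fun z => g * z) '' A) = μ A


theorem fin_index {K : Type*} [Group K] (f : K → ℝ) (D : ℝ)
    (hq : ∀ g h, |f (g * h) - f g - f h| ≤ D)
    (hfin : ∀ C : ℝ, {g | |f g| ≤ C}.Finite) :
    ∃ z : K, Finite (K ⧸ Subgroup.zpowers z) := by
  by_cases H : ∃ z, D + 1 ≤ f z
  · obtain ⟨z, hz⟩ := H
    refine ⟨z, ?_⟩
    have key : ∀ h : K, ∃ n : ℤ, |f (h * z ^ n)| ≤ f z + D := by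
      intro h
      have hs : ∀ n : ℤ, f (h * z ^ n) + 1 ≤ f (h * z ^ (n+1)) ∧
          f (h * z ^ (n+1)) ≤ f (h * z ^ n) + (f z + D) := by
        intro n
        have := abs_le.1 (hq (h * z ^ n) z)
        rw [mul_assoc, ← zpow_add_one] at this
        constructor <;> linarith
      have up : ∀ m : ℕ, ∀ n : ℤ, f (h * z ^ n) + m ≤ f (h * z ^ (n + m)) := by
        intro m
        induction m with
        | zero => intro n; simp
        | succ m ih =>
          intro n
          have h1 := (hs (n + m)).1
          have h2 := ih n
          push_cast
          rw [← add_assoc n]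
          linarith
      obtain ⟨n, hn, hmax⟩ := Int.exists_greatest_of_bdd
        (P := fun n : ℤ => f (h * z ^ n) ≤ f z + D)
        ⟨(⌈f z + D - f h⌉₊ : ℤ), by
          intro n hn
          by_contra hc
          push Not at hc
          obtain ⟨m, rfl⟩ := Int.eq_ofNat_of_zero_le (a := n) (by omega)
          have := up m 0
          simp only [zpow_zero, mul_one, zero_add] at this
          have h3 := Nat.le_ceil (f z + D - f h)
          have h4 : ((⌈f z + D - f h⌉₊ : ℕ) : ℝ) < m := by exact_mod_cast hc
          linarith⟩
        ⟨-(⌈f h - (f z + D)⌉₊ : ℤ), by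
          have := up ⌈f h - (f z + D)⌉₊ (-(⌈f h - (f z + D)⌉₊ : ℤ))
          simp only [neg_add_cancel, zpow_zero, mul_one] at this
          have h3 := Nat.le_ceil (f h - (f z + D))
          linarith⟩
      refine ⟨n, abs_le.2 ⟨?_, hn⟩⟩
      by_contra hc
      have h1 := hmax (n+1) (by
        have := (hs n).2
        have := (abs_nonneg _).trans (hq 1 1)
        linarith)
      omega
    have : ((fun g : K => (g : K ⧸ Subgroup.zpowers z)) '' {g | |f g| ≤ f z + D}) = Set.univ := by
      rw [Set.eq_univ_iff_forall]
      intro q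
      induction q using QuotientGroup.induction_on with
      | H h =>
        obtain ⟨n, hn⟩ := key h
        refine ⟨_, hn, ?_⟩
        rw [QuotientGroup.eq]
        exact ⟨-n, by group⟩
    rw [← Set.finite_univ_iff, ← this]
    exact (hfin _).image _
  · push Not at H
    have hK : Finite K := by
      rw [← Set.finite_univ_iff]
      refine (hfin (3 * D + 1)).subset ?_
      intro g _
      have h0 := abs_le.1 (hq 1 1)
      have h1 := abs_le.1 (hq g g⁻¹)
      have h2 := H g
      have h3 := H g⁻¹
      simp only [mul_one, mul_inv_cancel] at h0 h1
      change |f g| ≤ 3 * D + 1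
      exact abs_le.2 ⟨by linarith [h0.1, h0.2, h1.1], by linarith [h0.1, h0.2, h1.1]⟩
    exact ⟨1, inferInstance⟩

open Filter Topology in
theorem mean_int : ∃ m : Set ℤ → ℝ, m Set.univ = 1 ∧ (∀ A, 0 ≤ m A) ∧
    (∀ A B, Disjoint A B → m (A ∪ B) = m A + m B) ∧
    ∀ (c : ℤ) A, m {n | n + c ∈ A} = m A := by
  classical
  let u : Set ℤ → ℕ → ℝ := fun A n =>
    (∑ k ∈ Finset.range (n+1), (if (k : ℤ) ∈ A then (1:ℝ) else 0)) / (n + 1)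
  have hu0 : ∀ A n, 0 ≤ u A n := fun A n => by
    refine div_nonneg (Finset.sum_nonneg fun k _ => ?_) (by positivity)
    split_ifs <;> norm_num
  have hu1 : ∀ A n, u A n ≤ 1 := fun A n => by
    rw [div_le_one (by positivity)]
    calc _ ≤ ∑ k ∈ Finset.range (n+1), (1:ℝ) := Finset.sum_le_sum fun k _ => by
          split_ifs <;> norm_num
      _ = _ := by simp
  have hex : ∀ A, ∃ r, Tendsto (u A) (hyperfilter ℕ : Filter ℕ) (𝓝 r) := by
    intro A
    have := isCompact_Icc.ultrafilter_le_nhds ((hyperfilter ℕ).map (u A)) (s := Set.Icc (0:ℝ) 1)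
      (by
        simp only [le_principal_iff, Ultrafilter.mem_coe, Ultrafilter.mem_map]
        exact Filter.univ_mem' fun n => ⟨hu0 A n, hu1 A n⟩)
    obtain ⟨r, _, hr⟩ := this
    exact ⟨r, hr⟩
  choose m hm using hex
  have hshift : ∀ A, m {n | n + 1 ∈ A} = m A := by
    intro A
    have hlim : Tendsto (fun n => u {n | n + 1 ∈ A} n - u A n) (hyperfilter ℕ : Filter ℕ) (𝓝 0) := by
      refine Tendsto.mono_left ?_ (Nat.hyperfilter_le_atTop)
      refine squeeze_zero_norm (a := fun n : ℕ => 1 / ((n:ℝ) + 1)) (fun n => ?_)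
        tendsto_one_div_add_atTop_nhds_zero_nat
      have : u {n | n + 1 ∈ A} n - u A n =
        ((if ((n+1 : ℕ) : ℤ) ∈ A then (1:ℝ) else 0) - (if (0:ℤ) ∈ A then (1:ℝ) else 0)) / (n+1) := by
        have h := (Finset.sum_range_succ (fun k : ℕ => if (k : ℤ) ∈ A then (1:ℝ) else 0) (n+1)).symm.trans
          (Finset.sum_range_succ' (fun k : ℕ => if (k : ℤ) ∈ A then (1:ℝ) else 0) (n+1))
        simp only [u, Set.mem_ofPred_eq]
        rw [← sub_div]
        congr 1
        push_cast at h ⊢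
        linarith
      rw [this, Real.norm_eq_abs, abs_div, abs_of_pos (show (0:ℝ) < n + 1 by positivity)]
      gcongr
      split_ifs <;> norm_num
    have := tendsto_nhds_unique hlim ((hm _).sub (hm A))
    linarith
  refine ⟨m, ?_, fun A => ge_of_tendsto' (hm A) (hu0 A), ?_, ?_⟩
  · refine tendsto_nhds_unique (hm _) (tendsto_const_nhds.congr fun n => ?_)
    have : (n:ℝ) + 1 ≠ 0 := by positivity
    simp [u, this]
  · intro A B hAB
    refine tendsto_nhds_unique (hm _) (((hm A).add (hm B)).congr fun n => ?_)
    simp only [u]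
    rw [← add_div, ← Finset.sum_add_distrib]
    congr 1
    refine Finset.sum_congr rfl fun k _ => ?_
    have := fun h => (Set.disjoint_left.1 hAB) (a := (k:ℤ)) h
    by_cases h1 : (k:ℤ) ∈ A <;> by_cases h2 : (k:ℤ) ∈ B <;> simp_all
  · intro c
    induction c using Int.induction_on with
    | zero => simp
    | succ i ih =>
      intro A
      rw [← ih A, ← hshift {n | n + (i:ℤ) ∈ A}]
      congr 1; ext n; simp only [Set.mem_ofPred_eq]; ring_nf
    | pred i ih =>
      intro A
      rw [← ih A, ← hshift {n | n + (-(i:ℤ) - 1) ∈ A}]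
      congr 1; ext n; simp only [Set.mem_ofPred_eq]; ring_nf

theorem mean_vc {K : Type*} [Group K] (z : K) [Finite (K ⧸ Subgroup.zpowers z)] :
    ∃ m : Set K → ℝ, m Set.univ = 1 ∧ (∀ A, 0 ≤ m A) ∧
    (∀ A B, Disjoint A B → m (A ∪ B) = m A + m B) ∧
    ∀ (g : K) A, m {x | g * x ∈ A} = m A := by
  classical
  obtain ⟨m, h1, h0, hadd, hsh⟩ := mean_int
  have := Fintype.ofFinite (K ⧸ Subgroup.zpowers z)
  have hc : (Fintype.card (K ⧸ Subgroup.zpowers z) : ℝ) ≠ 0 := by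
    exact_mod_cast Fintype.card_ne_zero
  refine ⟨fun A => (∑ q : K ⧸ Subgroup.zpowers z, m {n : ℤ | q.out * z ^ n ∈ A}) /
    Fintype.card (K ⧸ Subgroup.zpowers z), ?_, ?_, ?_, ?_⟩
  · simp [h1, hc]
  · exact fun A => div_nonneg (Finset.sum_nonneg fun q _ => h0 _) (by positivity)
  · intro A B hAB
    simp only
    rw [← add_div, ← Finset.sum_add_distrib]
    congr 1
    refine Finset.sum_congr rfl fun q _ => ?_
    rw [← hadd]
    · rfl
    · rw [Set.disjoint_left] at hAB ⊢
      exact fun n hn => hAB hn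
  · intro g A
    simp only
    congr 1
    refine Fintype.sum_equiv (MulAction.toPerm g) _ _ fun q => ?_
    have : ((g * q.out : K) : K ⧸ Subgroup.zpowers z) = (g • q).out := by
      rw [QuotientGroup.out_eq']
      conv_rhs => rw [← QuotientGroup.out_eq' q]
      rfl
    rw [QuotientGroup.eq, Subgroup.mem_zpowers_iff] at this
    obtain ⟨c, hcc⟩ := this
    have h2 : ∀ n : ℤ, g * (q.out * z ^ (n + c)) = (g • q).out * z ^ n := by
      intro n
      have : (g • q).out = g * q.out * z ^ c := by rw [hcc]; group
      rw [this, add_comm, zpow_add]; group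
    simp only [MulAction.toPerm_apply, Set.mem_ofPred_eq]
    rw [← hsh c {n | g * (q.out * z ^ n) ∈ A}]
    simp only [Set.mem_ofPred_eq, h2]

/-- Asymptotic sequences. -/
def Asym [MetricSpace α] (x y : ℕ → α) : Prop :=
  ∀ o : α, ∀ R : ℝ, ∃ N : ℕ, ∀ i, N ≤ i → ∀ j, N ≤ j →
    R ≤ gprod (fun x y : α => dist x y) (x i) (y j) o

theorem four_pt [MetricSpace α] {δ : ℝ} (hhyp : HyperbolicWith (fun x y : α => dist x y) δ)
    (x y z w : α) :
    dist x z + dist y w ≤ max (dist x y + dist z w) (dist y z + dist x w) + 2 * δ := by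
  have h := hhyp w x y z
  simp only [gprod] at h
  rcases min_cases ((dist x w + dist y w - dist x y) / 2)
    ((dist y w + dist z w - dist y z) / 2) with ⟨h1, _⟩ | ⟨h1, _⟩
  · rw [h1] at h
    have := le_max_left (dist x y + dist z w) (dist y z + dist x w)
    linarith
  · rw [h1] at h
    have := le_max_right (dist x y + dist z w) (dist y z + dist x w)
    linarith

theorem Asym.symm [MetricSpace α] {x y : ℕ → α} (h : Asym x y) : Asym y x := by
  intro o R
  obtain ⟨N, hN⟩ := h o R
  refine ⟨N, fun i hi j hj => (hN j hj i hi).trans_eq ?_⟩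
  simp only [gprod]
  rw [dist_comm (x j) (y i)]
  ring

theorem Asym.trans [MetricSpace α] {δ : ℝ} (hhyp : HyperbolicWith (fun x y : α => dist x y) δ)
    {x y z : ℕ → α} (h : Asym x y) (h' : Asym y z) : Asym x z := by
  intro o R
  obtain ⟨N, hN⟩ := h o (R + δ)
  obtain ⟨M, hM⟩ := h' o (R + δ)
  refine ⟨max N M, fun i hi j hj => ?_⟩
  have h1 := hN i ((le_max_left _ _).trans hi) (max N M) (le_max_left _ _)
  have h2 := hM (max N M) (le_max_right _ _) j ((le_max_right _ _).trans hj)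
  have h3 := hhyp o (x i) (y (max N M)) (z j)
  have := le_min h1 h2
  linarith

theorem Asym.smul [MetricSpace α] {G : Type*} [Group G] [MulAction G α]
    (hiso : ∀ g : G, Isometry (fun x : α => g • x)) (g : G)
    {x y : ℕ → α} (h : Asym x y) : Asym (fun n => g • x n) (fun n => g • y n) := by
  intro o R
  obtain ⟨N, hN⟩ := h (g⁻¹ • o) R
  refine ⟨N, fun i hi j hj => (hN i hi j hj).trans_eq ?_⟩
  have e : ∀ a b : α, dist (g • a) (g • b) = dist a b := fun a b => (hiso g).dist_eq a b
  simp only [gprod]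
  rw [← e (x i) (g⁻¹ • o), ← e (y j) (g⁻¹ • o), ← e (x i) (y j), smul_inv_smul]

theorem quot_iff [MetricSpace α] {δ : ℝ} (hhyp : HyperbolicWith (fun x y : α => dist x y) δ)
    (x y : BSeq (fun x y : α => dist x y)) :
    Quot.mk (BRel (fun x y : α => dist x y)) x = Quot.mk (BRel (fun x y : α => dist x y)) y ↔
      Asym x.1 y.1 := by
  have he : Equivalence (BRel (fun x y : α => dist x y)) :=
    ⟨fun x => x.2, fun {x y} h => Asym.symm (x := x.1) (y := y.1) h,
      fun {x y z} h h' => Asym.trans hhyp (x := x.1) (y := y.1) (z := z.1) h h'⟩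
  rw [Quot.eq, he.eqvGen_iff]
  rfl

theorem bfix_iff [MetricSpace α] {G : Type*} [Group G] [MulAction G α] {δ : ℝ}
    (hhyp : HyperbolicWith (fun x y : α => dist x y) δ)
    (hiso : ∀ g : G, Isometry (fun x : α => g • x))
    (x : BSeq (fun x y : α => dist x y)) (g : G) :
    BFixes (fun x y : α => dist x y) g (Quot.mk (BRel (fun x y : α => dist x y)) x) ↔
      Asym x.1 (fun n => g • x.1 n) := by
  constructor
  · rintro ⟨y, h, h1, h2⟩
    rw [quot_iff hhyp] at h1 h2
    exact (Asym.trans hhyp (h1.smul hiso g).symm h2).symm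
  · intro h
    have h1 : Asym x.1 x.1 := x.2
    exact ⟨x, h1.smul hiso g, rfl, (quot_iff hhyp _ _).2 h.symm⟩

theorem bus [MetricSpace α] {δ : ℝ} (hhyp : HyperbolicWith (fun x y : α => dist x y) δ)
    {x y : ℕ → α} (h : Asym x y) (a b : α) : ∃ N, ∀ i, N ≤ i → ∀ j, N ≤ j →
      dist a (x i) - dist b (x i) ≤ dist a (y j) - dist b (y j) + 2 * δ := by
  obtain ⟨N, hN⟩ := h a (dist a b + δ + 1)
  refine ⟨N, fun i hi j hj => ?_⟩
  have h1 := hN i hi j hj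
  have h2 := four_pt hhyp a b (x i) (y j)
  simp only [gprod] at h1
  have h3 := dist_triangle a b (y j)
  rw [dist_comm (x i) a, dist_comm (y j) a] at h1
  rcases max_cases (dist a b + dist (x i) (y j)) (dist b (x i) + dist a (y j)) with
    ⟨e, _⟩ | ⟨e, _⟩ <;> rw [e] at h2 <;> linarith

theorem bus_abs [MetricSpace α] {δ : ℝ} (hhyp : HyperbolicWith (fun x y : α => dist x y) δ)
    {x y : ℕ → α} (h : Asym x y) (a b : α) : ∃ N, ∀ i, N ≤ i → ∀ j, N ≤ j →
      |dist a (x i) - dist b (x i) - (dist a (y j) - dist b (y j))| ≤ 2 * δ := by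
  obtain ⟨N, hN⟩ := bus hhyp h a b
  obtain ⟨M, hM⟩ := bus hhyp h b a
  refine ⟨max N M, fun i hi j hj => abs_le.2 ?_⟩
  have h1 := hN i ((le_max_left _ _).trans hi) j ((le_max_left _ _).trans hj)
  have h2 := hM i ((le_max_right _ _).trans hi) j ((le_max_right _ _).trans hj)
  constructor <;> linarith

/-- Points along a coarse ray to the boundary point. -/
theorem ray [MetricSpace α] (hgeo : GeodesicSpace α) {δ : ℝ}
    (hhyp : HyperbolicWith (fun x y : α => dist x y) δ)
    {x : ℕ → α} (h : Asym x x) (o : α) (t : ℝ) (ht : 0 ≤ t) :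
    ∃ p, dist o p = t ∧ ∃ N, ∀ j, N ≤ j → t + dist p (x j) ≤ dist o (x j) + 2 * δ := by
  obtain ⟨N, hN⟩ := h o t
  have h0 := hN N le_rfl N le_rfl
  simp only [gprod, dist_self] at h0
  rw [dist_comm (x N) o] at h0
  obtain ⟨f, f0, f1, hf⟩ := hgeo o (x N)
  have ht' : t ∈ Set.Icc 0 (dist o (x N)) := ⟨ht, by linarith⟩
  have e1 : dist o (f t) = t := by
    have := hf 0 t ⟨le_rfl, dist_nonneg⟩ ht'
    rw [f0] at this
    rw [this, zero_sub, abs_neg, abs_of_nonneg ht]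
  have e2 : dist (f t) (x N) = dist o (x N) - t := by
    have := hf t (dist o (x N)) ht' ⟨dist_nonneg, le_rfl⟩
    rw [f1] at this
    rw [this, abs_sub_comm, abs_of_nonneg (by linarith)]
  refine ⟨f t, e1, N, fun j hj => ?_⟩
  have h1 := hN N le_rfl j hj
  have h2 := four_pt hhyp (f t) (x N) (x j) o
  simp only [gprod] at h1
  rw [dist_comm (x N) o, dist_comm (x j) o] at h1
  rw [dist_comm (x N) o, dist_comm (x j) o, dist_comm (f t) o, e1, e2] at h2
  rcases max_cases (dist o (x N) - t + dist o (x j)) (dist (x N) (x j) + t) with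
    ⟨e, _⟩ | ⟨e, _⟩ <;> rw [e] at h2 <;> linarith

/-- The stabilizer of the class of `x`. -/
def stab [MetricSpace α] {G : Type*} [Group G] [MulAction G α] {δ : ℝ}
    (hhyp : HyperbolicWith (fun x y : α => dist x y) δ)
    (hiso : ∀ g : G, Isometry (fun x : α => g • x)) (x : ℕ → α) (hx : Asym x x) :
    Subgroup G where
  carrier := {g | Asym x (fun n => g • x n)}
  one_mem' := by simpa using hx
  mul_mem' := by
    intro g h hg hh
    have := Asym.trans hhyp hg (Asym.smul hiso g hh)
    simpa [mul_smul] using this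
  inv_mem' := by
    intro g hg
    have := (Asym.smul hiso g⁻¹ hg).symm
    simpa using this

theorem move [MetricSpace α] {G : Type*} [Group G] [MulAction G α] {δ : ℝ} (hδ : 0 ≤ δ)
    (hhyp : HyperbolicWith (fun x y : α => dist x y) δ)
    (hiso : ∀ g : G, Isometry (fun x : α => g • x)) {x : ℕ → α}
    (g : G) (hg : Asym x (fun n => g • x n)) (o : α) (r K : ℝ) (hK : |r| ≤ K)
    (hr : ∃ N, ∀ i, N ≤ i → |dist o (x i) - dist (g • o) (x i) - r| ≤ 2 * δ)
    (t : ℝ) (ht : dist o (g • o) + 6 * δ ≤ t) (p : α) (hp : dist o p = t)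
    (hpx : ∃ N, ∀ j, N ≤ j → t + dist p (x j) ≤ dist o (x j) + 2 * δ) :
    dist p (g • p) ≤ K + 8 * δ := by
  have e : ∀ a b : α, dist (g • a) (g • b) = dist a b := fun a b => (hiso g).dist_eq a b
  obtain ⟨N1, h1⟩ := hr
  obtain ⟨N2, h2⟩ := hpx
  obtain ⟨N3, h3⟩ := bus hhyp hg (g • p) (g • o)
  let j := max N1 (max N2 N3)
  have j1 : N1 ≤ j := le_max_left _ _
  have j2 : N2 ≤ j := (le_max_left _ _).trans (le_max_right _ _)
  have j3 : N3 ≤ j := (le_max_right _ _).trans (le_max_right _ _)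
  have h1 := abs_le.1 (h1 j j1)
  have h2 := h2 j j2
  have h3 := h3 j j3 j j3
  simp only [e] at h3
  have hK := abs_le.1 hK
  have h1l := h1.1
  have h1r := h1.2
  have hKl := hK.1
  have hKr := hK.2
  have hd : (0:ℝ) ≤ dist o (g • o) := dist_nonneg
  have hq : dist o (g • p) ≤ t + K + 4 * δ := by
    have h4 := four_pt hhyp o (g • o) (g • p) (x j)
    rw [e, hp] at h4
    rcases max_cases (dist o (g • o) + dist (g • p) (x j)) (t + dist o (x j)) with
      ⟨e, _⟩ | ⟨e, _⟩ <;> rw [e] at h4 <;> linarith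
  have h4 := four_pt hhyp p o (g • p) (x j)
  rw [dist_comm p o, hp] at h4
  rcases max_cases (t + dist (g • p) (x j)) (dist o (g • p) + dist p (x j)) with
      ⟨e, _⟩ | ⟨e, _⟩ <;> rw [e] at h4 <;> linarith

theorem stab_index [MetricSpace α] {G : Type*} [Group G] [MulAction G α] {δ : ℝ} (hδ : 0 ≤ δ)
    (hgeo : GeodesicSpace α)
    (hhyp : HyperbolicWith (fun x y : α => dist x y) δ)
    (hiso : ∀ g : G, Isometry (fun x : α => g • x))
    (hacyl : ∀ ε : ℝ, 0 < ε → ∃ R : ℝ, 0 < R ∧ ∃ N : ℕ, 0 < N ∧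
      ∀ x y : α, R ≤ dist x y →
        {g : G | dist x (g • x) ≤ ε ∧ dist y (g • y) ≤ ε}.Finite ∧
        {g : G | dist x (g • x) ≤ ε ∧ dist y (g • y) ≤ ε}.ncard ≤ N)
    (x : ℕ → α) (hx : Asym x x) :
    ∃ z : stab hhyp hiso x hx, Finite (stab hhyp hiso x hx ⧸ Subgroup.zpowers z) := by
  have hB : ∀ a b, ∃ r, ∃ N, ∀ i, N ≤ i → |dist a (x i) - dist b (x i) - r| ≤ 2 * δ := by
    intro a b
    obtain ⟨N, hN⟩ := bus_abs hhyp hx a b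
    exact ⟨dist a (x N) - dist b (x N), N, fun i hi => hN i hi N le_rfl⟩
  choose B hB using hB
  let o := x 0
  haveI : Nonempty α := ⟨o⟩
  choose! p hp hpx using fun t ht => ray hgeo hhyp hx o t ht
  refine fin_index (fun g => B o ((g : G) • o)) (8 * δ) ?_ ?_
  · rintro ⟨g, hg⟩ ⟨h, hh⟩
    obtain ⟨N1, h1⟩ := hB o ((g * h) • o)
    obtain ⟨N2, h2⟩ := hB o (g • o)
    obtain ⟨N3, h3⟩ := hB o (h • o)
    obtain ⟨N4, h4⟩ := bus_abs hhyp hg (g • o) ((g * h) • o)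
    let j := max (max N1 N2) (max N3 N4)
    have h1 := abs_le.1 (h1 j ((le_max_left _ _).trans (le_max_left _ _)))
    have h2 := abs_le.1 (h2 j ((le_max_right _ _).trans (le_max_left _ _)))
    have h3 := abs_le.1 (h3 j ((le_max_left _ _).trans (le_max_right _ _)))
    have j4 : N4 ≤ j := (le_max_right _ _).trans (le_max_right _ _)
    have h4 := abs_le.1 (h4 j j4 j j4)
    have e : ∀ a b : α, dist (g • a) (g • b) = dist a b := fun a b => (hiso g).dist_eq a b
    simp only [mul_smul, e] at h1 h4
    simp only [Subgroup.coe_mul, mul_smul] 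
    exact abs_le.2 ⟨by linarith [h1.1, h1.2, h2.1, h2.2, h3.1, h3.2, h4.1, h4.2],
      by linarith [h1.1, h1.2, h2.1, h2.2, h3.1, h3.2, h4.1, h4.2]⟩
  · intro K
    obtain ⟨R, hR, N, hN, hac⟩ := hacyl (|K| + 8 * δ + 1) (by positivity)
    by_contra hinf
    obtain ⟨F, hF, hcard⟩ := Set.Infinite.exists_subset_card_eq hinf (N + 1)
    obtain ⟨t, ht⟩ : ∃ t : ℝ, ∀ g ∈ F, dist o ((g : G) • o) + 6 * δ ≤ t := by
      obtain ⟨t, ht⟩ := (F.image (fun g : stab hhyp hiso x hx => dist o ((g : G) • o) + 6 * δ)).bddAbove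
      exact ⟨t, fun g hg => ht (Finset.mem_coe.2 (Finset.mem_image_of_mem _ hg))⟩
    let s := max t 0
    have hs : 0 ≤ s := le_max_right _ _
    have hd : R ≤ dist (p s) (p (s + R)) := by
      have h1 := hp s hs
      have h2 := hp (s + R) (by linarith)
      have := dist_triangle o (p s) (p (s + R))
      linarith
    obtain ⟨hf, hc⟩ := hac _ _ hd
    have hmv : ∀ g ∈ F, ∀ u, s ≤ u → dist (p u) ((g : G) • p u) ≤ |K| + 8 * δ + 1 := by
      intro g hg u hu
      have := move hδ hhyp hiso (g : G) g.2 o _ |K| ((hF hg : _ ≤ K).trans (le_abs_self K))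
        (hB o ((g : G) • o)) u ((ht g hg).trans ((le_max_left _ _).trans hu)) (p u)
        (hp u (hs.trans hu)) (hpx u (hs.trans hu))
      linarith
    have hsub : Subtype.val '' (F : Set (stab hhyp hiso x hx)) ⊆
        {g : G | dist (p s) (g • p s) ≤ |K| + 8 * δ + 1 ∧
          dist (p (s + R)) (g • p (s + R)) ≤ |K| + 8 * δ + 1} := by
      rintro _ ⟨g, hg, rfl⟩
      exact ⟨hmv g hg s le_rfl, hmv g hg (s + R) (by linarith)⟩
    have h1 := Set.ncard_le_ncard hsub hf
    rw [Set.ncard_image_of_injective _ Subtype.val_injective, Set.ncard_coe_finset, hcard] at h1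
    omega

/-- Lemma 5.4: if a group `G` acts isometrically and acylindrically on
a δ-hyperbolic geodesic metric space, then the stabilizer of any Gromov boundary
point is virtually cyclic (it contains a cyclic subgroup `Z` such that finitely many
cosets of `Z` cover the stabilizer); in particular, if `G` is countable then all such
stabilizers are amenable. -/
theorem statement19 (α G : Type*) [MetricSpace α] [Group G] [MulAction G α] (δ : ℕ)
    (hgeo : GeodesicSpace α)
    (hhyp : HyperbolicWith (fun x y : α => dist x y) (δ : ℝ))
    (hiso : ∀ g : G, Isometry (fun x : α => g • x))
    (hacyl : ∀ ε : ℝ, 0 < ε → ∃ R : ℝ, 0 < R ∧ ∃ N : ℕ, 0 < N ∧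
      ∀ x y : α, R ≤ dist x y →
        {g : G | dist x (g • x) ≤ ε ∧ dist y (g • y) ≤ ε}.Finite ∧
        {g : G | dist x (g • x) ≤ ε ∧ dist y (g • y) ≤ ε}.ncard ≤ N)
    (ξ : Bdry (fun x y : α => dist x y)) :
    (∃ (Z : Subgroup G) (g₀ : G) (T : Finset G),
      (∀ z ∈ Z, BFixes (fun x y : α => dist x y) z ξ) ∧
      (∀ z ∈ Z, ∃ n : ℤ, z = g₀ ^ n) ∧
      {g : G | BFixes (fun x y : α => dist x y) g ξ} ⊆
        ⋃ t ∈ T, (fun z => t * z) '' (Z : Set G)) ∧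
    (Countable G → AmenableSet {g : G | BFixes (fun x y : α => dist x y) g ξ}) := by
  obtain ⟨x, rfl⟩ := Quot.exists_rep ξ
  have hx : Asym x.1 x.1 := x.2
  obtain ⟨z, hz⟩ := stab_index (Nat.cast_nonneg δ) hgeo hhyp hiso hacyl x.1 hx
  have hfix : ∀ g : G, BFixes (fun x y : α => dist x y) g
      (Quot.mk (BRel (fun x y : α => dist x y)) x) ↔ g ∈ stab hhyp hiso x.1 hx :=
    fun g => bfix_iff hhyp hiso x g
  refine ⟨?_, fun _ => ?_⟩
  · classical
    have := Fintype.ofFinite (stab hhyp hiso x.1 hx ⧸ Subgroup.zpowers z)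
    refine ⟨Subgroup.zpowers (z : G), z, Finset.univ.image
      (fun q : stab hhyp hiso x.1 hx ⧸ Subgroup.zpowers z => ((q.out : stab hhyp hiso x.1 hx) : G)),
      ?_, ?_, ?_⟩
    · rintro _ ⟨n, rfl⟩
      rw [hfix]
      exact Subgroup.zpow_mem _ z.2 n
    · rintro _ ⟨n, rfl⟩
      exact ⟨n, rfl⟩
    · intro g hg
      have hg' := (hfix g).1 hg
      let g' : stab hhyp hiso x.1 hx := ⟨g, hg'⟩
      have h1 := QuotientGroup.out_eq' (g' : stab hhyp hiso x.1 hx ⧸ Subgroup.zpowers z)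
      rw [QuotientGroup.eq, Subgroup.mem_zpowers_iff] at h1
      obtain ⟨n, hn⟩ := h1
      simp only [Set.mem_iUnion]
      refine ⟨_, Finset.mem_image_of_mem _
        (Finset.mem_univ (g' : stab hhyp hiso x.1 hx ⧸ Subgroup.zpowers z)), (z : G) ^ n,
        ⟨n, rfl⟩, ?_⟩
      have h2 := congrArg (Subtype.val) hn
      simp only [Subgroup.coe_zpow, Subgroup.coe_mul, Subgroup.coe_inv] at h2
      simp only [h2, mul_inv_cancel_left]
      rfl
  · obtain ⟨m, h1, h0, hadd, hsh⟩ := mean_vc z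
    refine ⟨fun A => m (Subtype.val ⁻¹' A), ?_, fun A _ => h0 _, ?_, ?_⟩
    · rw [← h1]
      refine congrArg m ?_
      ext g
      simpa using (hfix g).2 g.2
    · intro A B _ _ hAB
      exact hadd _ _ (hAB.preimage _)
    · intro g hg A _
      change m _ = m _
      rw [← hsh ⟨g, (hfix g).1 hg⟩]
      refine congrArg m ?_
      ext y
      simp

end ArXiv
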